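/- Ratio bound for IDUE with Padding-and-Sampling (Lemma 2): Let m, ℓ ≥ 1 and let a_k, b_k ∈ ℝ with 0 < b_k < a_k < 1 for k = 1,…,m+ℓ; set α_k = a_k/b_k and β_k = (1−a_k)/(1−b_k). For i ∈ {1,…,m+ℓ} and y ∈ {0,1}^{m+ℓ}, let Q_i(y) = ∏_{k=1}^{m+ℓ} p_k^{y_k}(1−p_k)^{1−y_k} with p_k = a_k if k = i and p_k = b_k otherwise. For a nonempty finite set x ⊆ {1,…,m}, set η_x = |x| / max(|x|, ℓ) and define the IDUE-PS output probability P(y|x) = η_x · (∑_{i∈x} Q_i(y))/|x| + (1 − η_x) · (∑_{i=m+1}^{m+ℓ} Q_i(y))/ℓ. Then for all nonempty x, x' ⊆ {1,…,m} and every y ∈ {0,1}^{m+ℓ}: P(y|x) · [ η_{x'}·(∑_{j∈x'} β_j)/|x'| + (1−η_{x'})·(∑_{j=m+1}^{m+ℓ} β_j)/ℓ ] ≤ P(y|x') · [ η_x·(∑_{i∈x} α_i)/|x| + (1−η_x)·(∑_{i=m+1}^{m+ℓ} α_i)/ℓ ], i.e., P(y|x)/P(y|x') ≤ (η_x ∑_{i∈x}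 α_i/|x| + (1−η_x) ∑_{i>m} α_i/ℓ)/(η_{x'} ∑_{j∈x'} β_j/|x'| + (1−η_{x'}) ∑_{j>m} β_j/ℓ). -/

import Mathlib

/-!
Let `R = ∏ k, (if y k then b k else 1 - b k)` be the probability of `y` under an all-zero input.
Switching on bit `i` alters a single factor, so `Q_i(y) = R * r_i` with `r_i = α_i` or
`r_i = β_i` according to `y i`; as `β_i ≤ 1 ≤ α_i`, this gives `R * β_i ≤ Q_i(y) ≤ R * α_i`
(`mul_beta_le_idueProb`, `idueProb_le_mul_alpha`). `P(y|x)` and both brackets of the theorem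
are values of one monotone, homogeneous averaging functional `psMix`, whence
`P(y|x) ≤ R * A(x)` and `R * B(x') ≤ P(y|x')`, where `A` and `B` average `α` and `β`.
Multiplying, `P(y|x) * B(x') ≤ R * A(x) * B(x') ≤ P(y|x') * A(x)`.
-/

/-- Output probability of IDUE given one-hot input `v_i` over `N` bits. -/
noncomputable def idueProb {N : ℕ} (a b : Fin N → ℝ) (i : Fin N)
    (y : Fin N → Bool) : ℝ :=
  ∏ k, if y k then (if k = i then a k else b k) else (1 - if k = i then a k else b k)

/-- `η_x = |x| / max(|x|, ℓ)`: the probability of sampling a genuine item from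
the padded set of `x`. -/
noncomputable def padEta (ℓ : ℕ) {N : ℕ} (x : Finset (Fin N)) : ℝ :=
  (x.card : ℝ) / max (x.card : ℝ) (ℓ : ℝ)

/-- Output probability `Pr(y|x)` of the IDUE-PS mechanism on item-set input `x`,
over item domain `{0,…,m-1}` with `ℓ` dummy items `{m,…,m+ℓ-1}`. -/
noncomputable def iduePSProb (m ℓ : ℕ) (a b : Fin (m + ℓ) → ℝ)
    (x : Finset (Fin (m + ℓ))) (y : Fin (m + ℓ) → Bool) : ℝ :=
  padEta ℓ x * (∑ i ∈ x, idueProb a b i y) / x.card +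
    (1 - padEta ℓ x) *
      (∑ i ∈ Finset.univ.filter (fun k : Fin (m + ℓ) => m ≤ (k : ℕ)),
        idueProb a b i y) / ℓ

/-- The probability of the output `y` when every input bit is `0`. -/
noncomputable def baseProb {N : ℕ} (b : Fin N → ℝ) (y : Fin N → Bool) : ℝ :=
  ∏ k, if y k then b k else 1 - b k

/-- The average of `f` over the item sampled from the padded set of `x`. -/
noncomputable def psMix (m ℓ : ℕ) (x : Finset (Fin (m + ℓ))) (f : Fin (m + ℓ) → ℝ) : ℝ :=
  padEta ℓ x * (∑ i ∈ x, f i) / x.card +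
    (1 - padEta ℓ x) *
      (∑ i ∈ Finset.univ.filter (fun k : Fin (m + ℓ) => m ≤ (k : ℕ)), f i) / ℓ

lemma padEta_nonneg (ℓ : ℕ) {N : ℕ} (x : Finset (Fin N)) : 0 ≤ padEta ℓ x := by
  unfold padEta
  positivity

lemma padEta_le_one (ℓ : ℕ) {N : ℕ} (x : Finset (Fin N)) : padEta ℓ x ≤ 1 :=
  div_le_one_of_le₀ (le_max_left _ _) (le_max_of_le_left (Nat.cast_nonneg _))

lemma psMix_mono (m ℓ : ℕ) (x : Finset (Fin (m + ℓ))) {f g : Fin (m + ℓ) → ℝ}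
    (h : ∀ i, f i ≤ g i) : psMix m ℓ x f ≤ psMix m ℓ x g := by
  have h0 := padEta_nonneg ℓ x
  have h1 : 0 ≤ 1 - padEta ℓ x := sub_nonneg.2 (padEta_le_one ℓ x)
  unfold psMix
  gcongr with i _ i _
  · exact h i
  · exact h i

lemma psMix_const_mul (m ℓ : ℕ) (x : Finset (Fin (m + ℓ))) (c : ℝ) (f : Fin (m + ℓ) → ℝ) :
    psMix m ℓ x (fun i => c * f i) = c * psMix m ℓ x f := by
  simp only [psMix, ← Finset.mul_sum]
  ring

lemma psMix_nonneg (m ℓ : ℕ) (x : Finset (Fin (m + ℓ))) {f : Fin (m + ℓ) → ℝ}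
    (h : ∀ i, 0 ≤ f i) : 0 ≤ psMix m ℓ x f := by
  have hmono := psMix_mono m ℓ x (f := fun _ => 0) h
  simpa [psMix] using hmono

section

variable {N : ℕ} {a b : Fin N → ℝ}

lemma baseProb_nonneg (hb : ∀ k, 0 < b k) (hb1 : ∀ k, b k < 1) (y : Fin N → Bool) :
    0 ≤ baseProb b y := by
  refine Finset.prod_nonneg fun k _ => ?_
  split_ifs
  · exact (hb k).le
  · exact sub_nonneg.2 (hb1 k).le

/-- Switching on the input bit `i` multiplies the output probability by `α_i` or `β_i`,
since only the `i`-th factor of the product changes. -/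
lemma idueProb_eq (hb : ∀ k, 0 < b k) (hb1 : ∀ k, b k < 1) (i : Fin N) (y : Fin N → Bool) :
    idueProb a b i y =
      baseProb b y * (if y i then a i / b i else (1 - a i) / (1 - b i)) := by
  unfold idueProb baseProb
  rw [← Finset.mul_prod_erase _ _ (Finset.mem_univ i),
    ← Finset.mul_prod_erase _ (fun k => if y k then b k else 1 - b k) (Finset.mem_univ i)]
  have hrest : ∏ k ∈ Finset.univ.erase i,
      (if y k then (if k = i then a k else b k) else (1 - if k = i then a k else b k)) =
      ∏ k ∈ Finset.univ.erase i, (if y k then b k else 1 - b k) :=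
    Finset.prod_congr rfl fun k hk => by simp [Finset.ne_of_mem_erase hk]
  rw [hrest]
  have h0 : b i ≠ 0 := (hb i).ne'
  have h1 : 1 - b i ≠ 0 := (sub_pos.2 (hb1 i)).ne'
  cases y i
  · simp only [if_true, Bool.false_eq_true, if_false]
    field_simp
  · simp only [if_true]
    field_simp

lemma beta_le_alpha (hb : ∀ k, 0 < b k) (hba : ∀ k, b k < a k) (ha : ∀ k, a k < 1)
    (i : Fin N) : (1 - a i) / (1 - b i) ≤ a i / b i := by
  have h1 : (1 - a i) / (1 - b i) ≤ 1 :=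
    (div_le_one (sub_pos.2 ((hba i).trans (ha i)))).2 (by linarith [hba i])
  have h2 : 1 ≤ a i / b i := (one_le_div (hb i)).2 (hba i).le
  exact h1.trans h2

lemma idueProb_le_mul_alpha (hb : ∀ k, 0 < b k) (hba : ∀ k, b k < a k) (ha : ∀ k, a k < 1)
    (y : Fin N → Bool) (i : Fin N) :
    idueProb a b i y ≤ baseProb b y * (a i / b i) := by
  have hb1 : ∀ k, b k < 1 := fun k => (hba k).trans (ha k)
  rw [idueProb_eq hb hb1]
  refine mul_le_mul_of_nonneg_left ?_ (baseProb_nonneg hb hb1 y)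
  split_ifs
  · exact le_rfl
  · exact beta_le_alpha hb hba ha i

lemma mul_beta_le_idueProb (hb : ∀ k, 0 < b k) (hba : ∀ k, b k < a k) (ha : ∀ k, a k < 1)
    (y : Fin N → Bool) (i : Fin N) :
    baseProb b y * ((1 - a i) / (1 - b i)) ≤ idueProb a b i y := by
  have hb1 : ∀ k, b k < 1 := fun k => (hba k).trans (ha k)
  rw [idueProb_eq hb hb1]
  refine mul_le_mul_of_nonneg_left ?_ (baseProb_nonneg hb hb1 y)
  split_ifs
  · exact beta_le_alpha hb hba ha i
  · exact le_rfl

end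

theorem idue_ps_ratio_bound (m ℓ : ℕ) (hm : 1 ≤ m) (hℓ : 1 ≤ ℓ)
    (a b : Fin (m + ℓ) → ℝ)
    (hb : ∀ k, 0 < b k) (hba : ∀ k, b k < a k) (ha : ∀ k, a k < 1)
    (x x' : Finset (Fin (m + ℓ)))
    (hxne : x.Nonempty) (hx'ne : x'.Nonempty)
    (hx : ∀ k ∈ x, (k : ℕ) < m) (hx' : ∀ k ∈ x', (k : ℕ) < m)
    (y : Fin (m + ℓ) → Bool) :
    iduePSProb m ℓ a b x y *
        (padEta ℓ x' * (∑ j ∈ x', (1 - a j) / (1 - b j)) / x'.card +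
          (1 - padEta ℓ x') *
            (∑ j ∈ Finset.univ.filter (fun k : Fin (m + ℓ) => m ≤ (k : ℕ)),
              (1 - a j) / (1 - b j)) / ℓ) ≤
      iduePSProb m ℓ a b x' y *
        (padEta ℓ x * (∑ i ∈ x, a i / b i) / x.card +
          (1 - padEta ℓ x) *
            (∑ i ∈ Finset.univ.filter (fun k : Fin (m + ℓ) => m ≤ (k : ℕ)),
              a i / b i) / ℓ) := by
  change psMix m ℓ x (fun i => idueProb a b i y) * psMix m ℓ x' (fun j => (1 - a j) / (1 - b j)) ≤
    psMix m ℓ x' (fun i => idueProb a b i y) * psMix m ℓ x (fun i => a i / b i)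
  have hupper := psMix_mono m ℓ x (idueProb_le_mul_alpha hb hba ha y)
  have hlower := psMix_mono m ℓ x' (mul_beta_le_idueProb hb hba ha y)
  rw [psMix_const_mul] at hupper hlower
  have hA : 0 ≤ psMix m ℓ x (fun i => a i / b i) :=
    psMix_nonneg m ℓ x fun i => div_nonneg ((hb i).trans (hba i)).le (hb i).le
  have hB : 0 ≤ psMix m ℓ x' (fun j => (1 - a j) / (1 - b j)) :=
    psMix_nonneg m ℓ x' fun j =>
      div_nonneg (sub_nonneg.2 (ha j).le) (sub_nonneg.2 ((hba j).trans (ha j)).le)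
  calc _ ≤ baseProb b y * psMix m ℓ x (fun i => a i / b i) *
        psMix m ℓ x' (fun j => (1 - a j) / (1 - b j)) := mul_le_mul_of_nonneg_right hupper hB
    _ = baseProb b y * psMix m ℓ x' (fun j => (1 - a j) / (1 - b j)) *
        psMix m ℓ x (fun i => a i / b i) := by ring
    _ ≤ _ := mul_le_mul_of_nonneg_right hlower hA
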